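/- **Setting.** Let $F$ be a signature and $V$ a set of variables. Let $R$ be a deterministic conditional term rewriting system (DCTRS) over $F$: a set of rules $\rho: l \to r \Leftarrow s_1 \approx t_1, \dots, s_k \approx t_k$ ($k \ge 0$) over $F$ and $V$ with $l \notin V$, $\mathrm{Var}(s_i) \subseteq \mathrm{Var}(l, t_1, \dots, t_{i-1})$ for all $i$, and $\mathrm{Var}(r) \subseteq \mathrm{Var}(l, s_1, t_1, \dots, s_k, t_k)$. A rule is conditional if $k \ge 1$. Defined symbols are the root symbols of left-hand sides of $R$; the other symbols of $F$ are constructors. Each symbol $f$ has finitely many, say $m = m_f$, conditional $f$-rules (conditional rules whose left-hand side has root $f$), numbered $1, \dots, m$ in some fixed order. For a conditional rule $\rho$ put $X_j = \mathrm{Var}(l, t_1, \dots, t_{j-1})$ and $V_j = \mathrm{Var}(t_1, \dots, t_{j-1})$, and let $\vec{X_j}$, $\vec{V_j}$ list these sets in a fixed order. **Unraveling.** $U(R)$ consists of the unconditional rules of $R$ and, for each conditional $\rho \in R$, of the rules $l \to U^\rho_1(s_1, \vec{X_1})$, $U^\rho_j(t_j, \vec{X_j}) \to U^\rho_{j+1}(s_{j+1},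 \vec{X_{j+1}})$ for $1 \le j < k$, and $U^\rho_k(t_k, \vec{X_k}) \to r$, where the $U^\rho_j$ are fresh symbols; $U_R(F)$ is $F$ with these symbols added. Assume that $R$ is $U$-WLL: for every rule $l' \to r'$ of $U(R)$, each variable of $r'$ occurs exactly once in $l'$. **SR transformation.** The signature $\bar F$ has a symbol $\bar f$ of arity $n + m_f$ for every $f \in F$ of arity $n$ (so a constructor keeps its arity), a constant $\bot$, a unary symbol $\langle\cdot\rangle$, and a tuple symbol $[\ ]^\rho_j$ of arity $1 + |V_j|$ for every conditional $\rho \in R$ and $1 \le j \le k$. For a term $t$ over $F$, $\mathrm{ext}(t)$ replaces each $f$ by $\bar f$ and fills the extra arguments (the last $m_f$ ones) with distinct fresh variables, and $\bar t$ does the same with $\bot$ in all extra arguments. The system $SR(R)$ consists of * $\mathrm{ext}(l) \to \langle \bar r \rangle$ for each unconditional rule $l \to r$ of $R$; * for the $i$-th conditional $f$-rule $\rho: f(w_1, \dots, w_n) \to r \Leftarrow s_1 \approx t_1, \dots, s_k \approx t_k$, writing $C[a] = \bar f(\mathrm{ext}(w_1), \dots, \mathrm{ext}(w_n), z_1, \dots,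 z_{i-1}, a, z_{i+1}, \dots, z_m)$ with fresh variables $z_q$: $C[\bot] \to C[[\langle \bar{s_1} \rangle, \vec{V_1}]^\rho_1]$, $C[[\langle \mathrm{ext}(t_j) \rangle, \vec{V_j}]^\rho_j] \to C[[\langle \overline{s_{j+1}} \rangle, \vec{V_{j+1}}]^\rho_{j+1}]$ for $1 \le j < k$, and $C[[\langle \mathrm{ext}(t_k) \rangle, \vec{V_k}]^\rho_k] \to \langle \bar r \rangle$; * $\langle\langle x \rangle\rangle \to \langle x \rangle$, and $\bar f(x_1, \dots, \langle x_i \rangle, \dots, x_n, z_1, \dots, z_m) \to \langle \bar f(x_1, \dots, x_n, \bot, \dots, \bot) \rangle$ for every $f \in F$ of arity $n$ and $1 \le i \le n$. A term $t \in T(\bar F, V)$ is reachable if it is a subterm of some $t_0$ with $\langle \bar s \rangle \to^*_{SR(R)} t_0$ for some $s \in T(F, V)$. The partial mapping $\hat{\cdot}$ from $T(\bar F, V)$ to $T(F, V)$ is given by $\hat x = x$ for $x \in V$, $\widehat{\bar f(t_1, \dots, t_n, u_1, \dots, u_m)} = f(\hat{t_1}, \dots, \hat{t_n})$ for $f \in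 F$ of arity $n$, and $\widehat{\langle t \rangle} = \hat t$; it is undefined on terms rooted by $\bot$ or a tuple symbol. **The mapping $\Phi$.** The sets $\Phi(t), \Psi(t) \subseteq T(U_R(F), V)$ are defined recursively by: * $\Phi(x) = \{x\}$ for $x \in V$; $\Phi(\langle t \rangle) = \Phi(t)$; $\Phi(\bar c(t_1, \dots, t_n)) = \{c(t'_1, \dots, t'_n) : t'_q \in \Phi(t_q)\}$ for constructors $c$; * $\Phi(\bar f(t_1, \dots, t_n, u_1, \dots, u_m)) = \Psi(\bar f(t_1, \dots, t_n, \bot, \dots, \bot)) \cup \bigcup_{i : u_i \ne \bot} \Psi(\bar f(t_1, \dots, t_n, \bot^{i-1}, u_i, \bot^{m-i}))$ for defined symbols $f$; * $\Psi(\bar f(t_1, \dots, t_n, \bot, \dots, \bot)) = \{f(t'_1, \dots, t'_n) : t'_q \in \Phi(t_q)\}$ for defined symbols $f$; * $\Psi(\bar f(a_1, \dots, a_n, \bot^{i-1}, [\langle t' \rangle, b_1, \dots, b_p]^\rho_j, \bot^{m-i})) = \{U^\rho_j(u', \vec{u}') : u' \in \Phi(t'),\ \vec{u}' \in \Phi(\sigma(\vec{X_j}))\}$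 (componentwise), if $\rho$ is the $i$-th conditional $f$-rule, with left-hand side $f(w_1, \dots, w_n)$, and $\sigma$ is a substitution with $\sigma(\vec{V_j}) = b_1, \dots, b_p$ and $\sigma(\mathrm{ext}(w_1), \dots, \mathrm{ext}(w_n)) = a_1, \dots, a_n$; * $\Phi(t) = \emptyset$ and $\Psi(t) = \emptyset$ in all other cases. **Statement.** Let $R$ be a $U$-WLL DCTRS over $F$. For every reachable term $t \in T(\bar F, V)$ whose root symbol is neither $\bot$ nor a tuple symbol $[\ ]^\rho_j$, the term $\hat t$ is defined and belongs to $\Phi(t)$; in particular, $|\Phi(t)| \ge 1$. -/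

import Mathlib

universe u v w

/-- First-order terms over a signature `F` and variables `X`. -/
inductive Term (F : Type u) (X : Type v) : Type (max u v) where
  | var : X → Term F X
  | app : F → List (Term F X) → Term F X

namespace Term

variable {F : Type u} {X : Type v} {Y : Type w}

/-- Application of a substitution. -/
def subst (σ : X → Term F Y) : Term F X → Term F Y
  | .var x => σ x
  | .app f ts => .app f (ts.map (fun t => subst σ t))

/-- Renaming of variables. -/
def rename (g : X → Y) (t : Term F X) : Term F Y := t.subst (fun x => .var (g x))

/-- The number `|t|_x` of occurrences of the variable `x` in `t`. -/
def count [DecidableEq X] (x : X) : Term F X → ℕ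
  | .var y => if y = x then 1 else 0
  | .app _ ts => (ts.map (fun t => count x t)).sum

/-- The list of variable occurrences of a term, from left to right. -/
def varList : Term F X → List X
  | .var x => [x]
  | .app _ ts => ts.flatMap (fun t => varList t)

/-- `t` respects the arities `ar`, that is, `t` is a term over the signature `(F, ar)`. -/
inductive WF (ar : F → ℕ) : Term F X → Prop where
  | var (x : X) : WF ar (.var x)
  | app (f : F) (ts : List (Term F X)) :
      ts.length = ar f → (∀ t ∈ ts, WF ar t) → WF ar (.app f ts)

/-- `IsSubterm s t`: `s` is a (not necessarily proper) subterm of `t`. -/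
inductive IsSubterm (s : Term F X) : Term F X → Prop where
  | refl : IsSubterm s s
  | arg {f : F} {ts : List (Term F X)} {t : Term F X} :
      t ∈ ts → IsSubterm s t → IsSubterm s (.app f ts)

end Term

/-- Number of occurrences of `x` in a sequence of terms. -/
def seqCount {F : Type u} {X : Type v} [DecidableEq X] (x : X) (ts : List (Term F X)) : ℕ :=
  (ts.map (Term.count x)).sum

/-- An oriented conditional rewrite rule `l → r ⇐ s₁ ≈ t₁, …, s_k ≈ t_k`
(unconditional if `k = 0`). -/
structure CRule (F : Type u) (X : Type v) : Type (max u v) where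
  lhs : Term F X
  rhs : Term F X
  conds : List (Term F X × Term F X)

/-- A conditional term rewriting system: a set of conditional rules. -/
abbrev CTRS (F : Type u) (X : Type v) := Set (CRule F X)

namespace CRule

variable {F : Type u} {X : Type v}

/-- Weak left-linearity: `|l, t₁, …, t_k|_x = 1` for every `x ∈ Var(r, s₁, …, s_k)`. -/
def WLL [DecidableEq X] (ρ : CRule F X) : Prop :=
  ∀ x : X, 0 < seqCount x (ρ.rhs :: ρ.conds.map Prod.fst) →
    seqCount x (ρ.lhs :: ρ.conds.map Prod.snd) = 1

/-- Determinism: `Var(s_{j+1}) ⊆ Var(l, t₁, …, t_j)` for all `j < k`. -/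
def Det [DecidableEq X] (ρ : CRule F X) : Prop :=
  ∀ (j : ℕ) (s t : Term F X), ρ.conds[j]? = some (s, t) → ∀ x : X, 0 < s.count x →
    0 < seqCount x (ρ.lhs :: (ρ.conds.take j).map Prod.snd)

/-- Type 3: `Var(r) ⊆ Var(l, s₁, t₁, …, s_k, t_k)`. -/
def Type3 [DecidableEq X] (ρ : CRule F X) : Prop :=
  ∀ x : X, 0 < ρ.rhs.count x →
    0 < seqCount x (ρ.lhs :: ρ.conds.flatMap (fun c => [c.1, c.2]))

/-- All terms of the rule are terms over the signature `(F, ar)`. -/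
def Over (ar : F → ℕ) (ρ : CRule F X) : Prop :=
  ρ.lhs.WF ar ∧ ρ.rhs.WF ar ∧ ∀ c ∈ ρ.conds, c.1.WF ar ∧ c.2.WF ar

end CRule

/-- `R` is a DCTRS over the signature `(F, ar)`: its rules are over `(F, ar)`, have non-variable
left-hand sides, are deterministic and are of Type 3. -/
def IsDCTRS {F : Type u} {V : Type v} [DecidableEq V] (ar : F → ℕ) (R : CTRS F V) : Prop :=
  ∀ ρ ∈ R, ρ.Over ar ∧ (∀ x : V, ρ.lhs ≠ .var x) ∧ ρ.Det ∧ ρ.Type3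

/-- Closure of a relation under contexts. -/
inductive CtxStep {F : Type u} {X : Type v} (root : Term F X → Term F X → Prop) :
    Term F X → Term F X → Prop where
  | root {s t : Term F X} : root s t → CtxStep root s t
  | congr {f : F} {pre post : List (Term F X)} {s t : Term F X} :
      CtxStep root s t →
      CtxStep root (.app f (pre ++ s :: post)) (.app f (pre ++ t :: post))

/-- A rewrite step at the root with a rule of `R`, the conditions being evaluated with `prev`.
The rules may use other variables (`Y`) than the terms that are rewritten (`X`). -/
def RootStep {F : Type u} {X : Type v} {Y : Type w} (R : CTRS F Y)
    (prev : Term F X → Term F X → Prop) (s t : Term F X) : Prop :=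
  ∃ ρ ∈ R, ∃ σ : Y → Term F X,
    s = ρ.lhs.subst σ ∧ t = ρ.rhs.subst σ ∧
    ∀ c ∈ ρ.conds, Relation.ReflTransGen prev (c.1.subst σ) (c.2.subst σ)

/-- The reduction relation of level `n`. -/
def LevelStep {F : Type u} {X : Type v} {Y : Type w} (R : CTRS F Y) :
    ℕ → Term F X → Term F X → Prop
  | 0 => fun _ _ => False
  | n + 1 => CtxStep (RootStep R (LevelStep R n))

/-- The reduction relation `→_R`, the union over all levels. -/
def Red {F : Type u} {X : Type v} {Y : Type w} (R : CTRS F Y) (s t : Term F X) : Prop :=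
  ∃ n : ℕ, LevelStep R n s t

/-! ### The simultaneous unraveling -/

/-- The symbols of `U_R(F)`: those of `F`, and `U^ρ_{j+1}`, written `Sum.inr (ρ, j)`. -/
abbrev USym (F : Type u) (V : Type v) := F ⊕ (CRule F V × ℕ)

/-- The inclusion of `T(F, V)` into `T(U_R(F), V)`. -/
def liftU {F : Type u} {V : Type v} : Term F V → Term (USym F V) V
  | .var x => .var x
  | .app f ts => .app (Sum.inl f) (ts.map (fun t => liftU t))

/-- The sequence of the elements of `X_{j+1} = Var(l, t₁, …, t_j)`. -/
def Xlist {F : Type u} {V : Type v} [DecidableEq V] (ρ : CRule F V) (j : ℕ) : List V :=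
  (ρ.lhs.varList ++ ((ρ.conds.take j).map Prod.snd).flatMap Term.varList).dedup

/-- The term `U^ρ_{j+1}(t, X_{j+1})`. -/
def uterm {F : Type u} {V : Type v} [DecidableEq V] (ρ : CRule F V) (j : ℕ) (t : Term F V) :
    Term (USym F V) V :=
  .app (Sum.inr (ρ, j)) (liftU t :: (Xlist ρ j).map Term.var)

/-- The simultaneous unraveling `U(R)`. -/
inductive USys {F : Type u} {V : Type v} [DecidableEq V] (R : CTRS F V) :
    CRule (USym F V) V → Prop where
  | uncond {ρ : CRule F V} : ρ ∈ R → ρ.conds = [] →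
      USys R ⟨liftU ρ.lhs, liftU ρ.rhs, []⟩
  | first {ρ : CRule F V} {s t : Term F V} : ρ ∈ R → ρ.conds[0]? = some (s, t) →
      USys R ⟨liftU ρ.lhs, uterm ρ 0 s, []⟩
  | next {ρ : CRule F V} {j : ℕ} {s t s' t' : Term F V} : ρ ∈ R →
      ρ.conds[j]? = some (s, t) → ρ.conds[j + 1]? = some (s', t') →
      USys R ⟨uterm ρ j t, uterm ρ (j + 1) s', []⟩
  | last {ρ : CRule F V} {j : ℕ} {s t : Term F V} : ρ ∈ R →
      ρ.conds[j]? = some (s, t) → j + 1 = ρ.conds.length →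
      USys R ⟨uterm ρ j t, liftU ρ.rhs, []⟩

/-- `R` is `U`-WLL: every rule of `U(R)` is WLL. -/
def IsUWLL {F : Type u} {V : Type v} [DecidableEq V] (R : CTRS F V) : Prop :=
  ∀ r, USys R r → r.WLL

/-! ### The SR transformation -/

/-- The symbols of the extended signature `F̄`: `c̄` and `f̄` (both `orig`), `⊥`, `⟨·⟩`, and
`[ ]^ρ_{j+1}`, written `tup ρ j`. -/
inductive SSym (F : Type u) (V : Type v) : Type (max u v) where
  | orig : F → SSym F V
  | bot : SSym F V
  | guard : SSym F V
  | tup : CRule F V → ℕ → SSym F V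

/-- The constant `⊥`. -/
def botT {F : Type u} {V : Type v} {X : Type w} : Term (SSym F V) X := .app .bot []

/-- The term `⟨t⟩`. -/
def guardT {F : Type u} {V : Type v} {X : Type w} (t : Term (SSym F V) X) :
    Term (SSym F V) X := .app .guard [t]

/-- The variables of the rules of `SR(R)`: those of `R`, and fresh ones. -/
abbrev RVar (V : Type v) := V ⊕ ℕ

/-- `f` is a defined symbol of `R`, that is, the root of a left-hand side. -/
def IsDefined {F : Type u} {V : Type v} (R : CTRS F V) (f : F) : Prop :=
  ∃ ρ ∈ R, ∃ ws, ρ.lhs = .app f ws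

/-- `m f` is the number of conditional `f`-rules of `R`, and `idx` numbers these rules:
`ρ` is the `(idx ρ + 1)`-th conditional `f`-rule. (So `m c = 0` for constructors `c`.) -/
def IsNumbering {F : Type u} {V : Type v} (R : CTRS F V) (m : F → ℕ)
    (idx : CRule F V → ℕ) : Prop :=
  ∀ f : F, Set.BijOn idx {ρ | ρ ∈ R ∧ ρ.conds ≠ [] ∧ ∃ ws, ρ.lhs = .app f ws} (Set.Iio (m f))

/-- `t̄`: every extra argument is `⊥`. -/
def barT {F : Type u} {V : Type v} (m : F → ℕ) : Term F V → Term (SSym F V) V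
  | .var x => .var x
  | .app f ts => .app (.orig f) (ts.map (fun t => barT m t) ++ List.replicate (m f) botT)

/-- `t̄`, as a term over the variables of the rules of `SR(R)`. -/
def barR {F : Type u} {V : Type v} (m : F → ℕ) (t : Term F V) : Term (SSym F V) (RVar V) :=
  (barT m t).rename Sum.inl

mutual
/-- `ext(t)`: the extra arguments are distinct fresh variables, numbered from `c` on. The second
component is the next unused number. -/
def extT {F : Type u} {V : Type v} (m : F → ℕ) :
    Term F V → ℕ → Term (SSym F V) (RVar V) × ℕ
  | .var x, c => (.var (Sum.inl x), c)
  | .app f ts, c =>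
      (.app (.orig f) ((extTList m ts c).1 ++
          (List.range (m f)).map (fun k => .var (Sum.inr ((extTList m ts c).2 + k)))),
        (extTList m ts c).2 + m f)

/-- `ext` on sequences of terms. -/
def extTList {F : Type u} {V : Type v} (m : F → ℕ) :
    List (Term F V) → ℕ → List (Term (SSym F V) (RVar V)) × ℕ
  | [], c => ([], c)
  | t :: ts, c =>
      ((extT m t c).1 :: (extTList m ts (extT m t c).2).1,
        (extTList m ts (extT m t c).2).2)
end

/-- The sequence of the elements of `V_{j+1} = Var(t₁, …, t_j)`. -/
def Vlist {F : Type u} {V : Type v} [DecidableEq V] (ρ : CRule F V) (j : ℕ) : List V :=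
  (((ρ.conds.take j).map Prod.snd).flatMap Term.varList).dedup

/-- The term `[⟨a⟩, V_{j+1}]^ρ_{j+1}`. -/
def tupT {F : Type u} {V : Type v} [DecidableEq V] (ρ : CRule F V) (j : ℕ)
    (a : Term (SSym F V) (RVar V)) : Term (SSym F V) (RVar V) :=
  .app (.tup ρ j) (guardT a :: (Vlist ρ j).map (fun x => .var (Sum.inl x)))

/-- For an `f`-rule `ρ` with arguments `ws` of its left-hand side, the term
`f̄(ext(ws), z₁, …, z_{i-1}, a, z_{i+1}, …, z_m)` with `i = idx ρ + 1`. -/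
def slotT {F : Type u} {V : Type v} (m : F → ℕ) (idx : CRule F V → ℕ) (ρ : CRule F V)
    (f : F) (ws : List (Term F V)) (a : Term (SSym F V) (RVar V)) :
    Term (SSym F V) (RVar V) :=
  .app (.orig f) ((extTList m ws 0).1 ++
    (List.range (m f)).map
      (fun q => if q = idx ρ then a else .var (Sum.inr ((extTList m ws 0).2 + q))))

/-- For an `f`-rule `ρ` with arguments `ws` of its left-hand side, `ext(t)` for a term `t` of the
conditions, its fresh variables being different from those of `slotT m idx ρ f ws`. -/
def extCond {F : Type u} {V : Type v} (m : F → ℕ) (f : F) (ws : List (Term F V))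
    (t : Term F V) : Term (SSym F V) (RVar V) :=
  (extT m t ((extTList m ws 0).2 + m f)).1

/-- The SR transformation `SR(R)`. The clause `shift` covers the auxiliary rules for constructors
(which have no extra arguments) and for defined symbols; its variables are `x_{q+1} = inr q` and
`z_{q+1} = inr (ar f + q)`. -/
inductive SRSys {F : Type u} {V : Type v} [DecidableEq V] (ar m : F → ℕ)
    (idx : CRule F V → ℕ) (R : CTRS F V) : CRule (SSym F V) (RVar V) → Prop where
  | uncond {ρ : CRule F V} : ρ ∈ R → ρ.conds = [] →
      SRSys ar m idx R ⟨(extT m ρ.lhs 0).1, guardT (barR m ρ.rhs), []⟩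
  | first {ρ : CRule F V} {f : F} {ws : List (Term F V)} {s t : Term F V} :
      ρ ∈ R → ρ.lhs = .app f ws → ρ.conds[0]? = some (s, t) →
      SRSys ar m idx R
        ⟨slotT m idx ρ f ws botT, slotT m idx ρ f ws (tupT ρ 0 (barR m s)), []⟩
  | next {ρ : CRule F V} {f : F} {ws : List (Term F V)} {j : ℕ} {s t s' t' : Term F V} :
      ρ ∈ R → ρ.lhs = .app f ws →
      ρ.conds[j]? = some (s, t) → ρ.conds[j + 1]? = some (s', t') →
      SRSys ar m idx R
        ⟨slotT m idx ρ f ws (tupT ρ j (extCond m f ws t)),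
          slotT m idx ρ f ws (tupT ρ (j + 1) (barR m s')), []⟩
  | last {ρ : CRule F V} {f : F} {ws : List (Term F V)} {j : ℕ} {s t : Term F V} :
      ρ ∈ R → ρ.lhs = .app f ws → ρ.conds[j]? = some (s, t) → j + 1 = ρ.conds.length →
      SRSys ar m idx R
        ⟨slotT m idx ρ f ws (tupT ρ j (extCond m f ws t)), guardT (barR m ρ.rhs), []⟩
  | unnest :
      SRSys ar m idx R
        ⟨guardT (guardT (.var (Sum.inr 0))), guardT (.var (Sum.inr 0)), []⟩
  | shift {f : F} {i : ℕ} : i < ar f →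
      SRSys ar m idx R
        ⟨.app (.orig f)
            ((List.range (ar f)).map
                (fun q => if q = i then guardT (.var (Sum.inr q)) else .var (Sum.inr q)) ++
              (List.range (m f)).map (fun q => .var (Sum.inr (ar f + q)))),
          guardT (.app (.orig f)
            ((List.range (ar f)).map (fun q => .var (Sum.inr q)) ++
              List.replicate (m f) botT)), []⟩

/-- `t` is reachable: it is a subterm of a term `t₀` with `⟨s̄⟩ →*_{SR(R)} t₀` for some
`s ∈ T(F, V)`. -/
def SRReachable {F : Type u} {V : Type v} [DecidableEq V] (ar m : F → ℕ)
    (idx : CRule F V → ℕ) (R : CTRS F V) (t : Term (SSym F V) V) : Prop :=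
  ∃ (s : Term F V) (t₀ : Term (SSym F V) V), s.WF ar ∧
    Relation.ReflTransGen (Red {r | SRSys ar m idx R r}) (guardT (barT m s)) t₀ ∧
    t.IsSubterm t₀

/-- The partial mapping `t̂`, which erases `⟨·⟩` and the extra arguments (those after the first
`ar f` ones). It is undefined (`none`) if erasing leaves a `⊥` or a tuple. -/
def hatT {F : Type u} {V : Type v} (ar : F → ℕ) : Term (SSym F V) V → Option (Term F V)
  | .var x => some (.var x)
  | .app (.orig f) ts =>
      Option.map (Term.app f) ((ts.take (ar f)).attach.mapM (fun t => hatT ar t.1))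
  | .app .guard [t] => hatT ar t
  | .app _ _ => none
decreasing_by
  · have h1 : t.1 ∈ ts := List.mem_of_mem_take t.2
    have := List.sizeOf_lt_of_mem h1
    simp only [Term.app.sizeOf_spec]
    omega
  · simp
    omega

/-! ### The mappings `Φ` and `Ψ` -/

mutual
/-- `PhiMem ar m idx R t u` means `u ∈ Φ(t)`. -/
inductive PhiMem {F : Type u} {V : Type v} [DecidableEq V] (ar m : F → ℕ)
    (idx : CRule F V → ℕ) (R : CTRS F V) :
    Term (SSym F V) V → Term (USym F V) V → Prop where
  | var (x : V) : PhiMem ar m idx R (.var x) (.var x)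
  | con {c : F} {ts : List (Term (SSym F V) V)} {us : List (Term (USym F V) V)} :
      ¬ IsDefined R c → ts.length = ar c → us.length = ar c →
      (∀ p ∈ ts.zip us, PhiMem ar m idx R p.1 p.2) →
      PhiMem ar m idx R (.app (.orig c) ts) (.app (Sum.inl c) us)
  | reset {f : F} {ts es : List (Term (SSym F V) V)} {u : Term (USym F V) V} :
      IsDefined R f → ts.length = ar f → es.length = m f →
      PsiMem ar m idx R (.app (.orig f) (ts ++ List.replicate (m f) botT)) u →
      PhiMem ar m idx R (.app (.orig f) (ts ++ es)) u
  | single {f : F} {ts es : List (Term (SSym F V) V)} {i : ℕ} {e : Term (SSym F V) V}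
      {u : Term (USym F V) V} :
      IsDefined R f → ts.length = ar f → es.length = m f → es[i]? = some e → e ≠ botT →
      PsiMem ar m idx R (.app (.orig f) (ts ++ (List.replicate (m f) botT).set i e)) u →
      PhiMem ar m idx R (.app (.orig f) (ts ++ es)) u
  | guard {t : Term (SSym F V) V} {u : Term (USym F V) V} :
      PhiMem ar m idx R t u → PhiMem ar m idx R (guardT t) u

/-- `PsiMem ar m idx R t u` means `u ∈ Ψ(t)`. -/
inductive PsiMem {F : Type u} {V : Type v} [DecidableEq V] (ar m : F → ℕ)
    (idx : CRule F V → ℕ) (R : CTRS F V) :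
    Term (SSym F V) V → Term (USym F V) V → Prop where
  | plain {f : F} {ts : List (Term (SSym F V) V)} {us : List (Term (USym F V) V)} :
      IsDefined R f → ts.length = ar f → us.length = ar f →
      (∀ p ∈ ts.zip us, PhiMem ar m idx R p.1 p.2) →
      PsiMem ar m idx R (.app (.orig f) (ts ++ List.replicate (m f) botT))
        (.app (Sum.inl f) us)
  | cond {f : F} {ρ : CRule F V} {ws : List (Term F V)} {j : ℕ}
      {ts vs : List (Term (SSym F V) V)} {t : Term (SSym F V) V}
      {σ : RVar V → Term (SSym F V) V}
      {u : Term (USym F V) V} {us : List (Term (USym F V) V)} :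
      ρ ∈ R → ρ.lhs = .app f ws → j < ρ.conds.length → ts.length = ar f →
      (Vlist ρ j).map (fun x => σ (Sum.inl x)) = vs →
      (extTList m ws 0).1.map (Term.subst σ) = ts →
      PhiMem ar m idx R t u →
      us.length = (Xlist ρ j).length →
      (∀ p ∈ (Xlist ρ j).zip us, PhiMem ar m idx R (σ (Sum.inl p.1)) p.2) →
      PsiMem ar m idx R
        (.app (.orig f) (ts ++ (List.replicate (m f) botT).set (idx ρ)
          (.app (.tup ρ j) (guardT t :: vs))))
        (.app (Sum.inr (ρ, j)) (u :: us))
end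

/-- The set `Φ(t)`. -/
def Phi {F : Type u} {V : Type v} [DecidableEq V] (ar m : F → ℕ) (idx : CRule F V → ℕ)
    (R : CTRS F V) (t : Term (SSym F V) V) : Set (Term (USym F V) V) :=
  {u | PhiMem ar m idx R t u}

/-- The root symbol of `t` is neither `⊥` nor a tuple symbol. -/
def ProperRoot {F : Type u} {V : Type v} (t : Term (SSym F V) V) : Prop :=
  (∀ as, t ≠ .app .bot as) ∧ ∀ ρ j as, t ≠ .app (.tup ρ j) as

/-!
Give the symbols of `F̄` two sorts: one for the terms that stand for terms over `F`, one for the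
contents of extra arguments, that is, `⊥` and the tuples. In every rule of `SR(R)` the variables can
be sorted so that both sides are well-sorted of the same sort, and by determinism and Type 3 the
right-hand side introduces no variables. Rewriting therefore preserves sorts, and every reachable
term is well-sorted. In a well-sorted term of the first sort, `⊥` and the tuples occur only inside
extra arguments; `t̂` erases these, and the first component of `Φ` resets them to `⊥`. Following
that component down the term produces exactly `t̂`.
-/

/-! ### Lists -/

section ListRelation

variable {α : Type u} {β : Type v} {R : α → β → Prop}

theorem forall₂_replicate_right_iff {b : β} :
    ∀ {n : ℕ} {l : List α},
      List.Forall₂ R l (List.replicate n b) ↔ l.length = n ∧ ∀ a ∈ l, R a b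
  | 0, [] => by simp
  | 0, _ :: _ => by simp
  | n + 1, [] => by simp [List.replicate_succ]
  | n + 1, a :: l => by
    simp only [List.replicate_succ, List.forall₂_cons, forall₂_replicate_right_iff (n := n),
      List.length_cons, Nat.add_right_cancel_iff, List.forall_mem_cons, and_left_comm]

theorem exists_mem_zip {l : List α} {l' : List β} (h : l.length ≤ l'.length) {a : α}
    (ha : a ∈ l) : ∃ b, (a, b) ∈ l.zip l' := by
  rw [← List.map_fst_zip h] at ha
  simpa using ha

theorem exists_forall₂_of_forall_exists {l : List α} (h : ∀ a ∈ l, ∃ b, R a b) :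
    ∃ l', List.Forall₂ R l l' := by
  induction l with
  | nil => exact ⟨[], .nil⟩
  | cons a l ih =>
    obtain ⟨b, hab⟩ := h a List.mem_cons_self
    obtain ⟨l', hl'⟩ := ih fun a ha => h a (List.mem_cons_of_mem _ ha)
    exact ⟨b :: l', .cons hab hl'⟩

theorem forall₂_replace {pre post : List α} {l : List β} {a a' : α}
    (h : List.Forall₂ R (pre ++ a :: post) l) (ha : ∀ b, R a b → R a' b) :
    List.Forall₂ R (pre ++ a' :: post) l := by
  induction pre generalizing l with
  | nil =>
    cases h with
    | cons hR hpost => exact .cons (ha _ hR) hpost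
  | cons _ _ ih =>
    cases h with
    | cons hR hrest => exact .cons hR (ih hrest)

theorem mapM_eq_some_of_forall₂ {f : α → Option β} {l : List α} {l' : List β}
    (h : List.Forall₂ (fun a b => f a = some b) l l') : l.mapM f = some l' := by
  induction h with
  | nil => rfl
  | cons hab _ ih => simp [hab, ih]

end ListRelation

/-! ### Many-sorted terms -/

/-- A many-sorted signature on the symbols `G`: `dom g` lists the sorts of the arguments of `g` (so
its length is the arity of `g`), and `cod g` is the sort of the terms with root `g`. -/
structure SortedSignature (G : Type u) (K : Type v) where
  dom : G → List K
  cod : G → K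

section ManySorted

variable {G : Type u} {X : Type v} {Y : Type w} {K : Type*}

/-- `HasSort S τ t k`: the term `t` is well-sorted, of sort `k`, in the many-sorted signature `S`,
where each variable `x` has the sort `τ x`. -/
inductive Term.HasSort (S : SortedSignature G K) (τ : X → K) : Term G X → K → Prop where
  | var (x : X) : HasSort S τ (.var x) (τ x)
  | app (g : G) (ts : List (Term G X)) :
      ts.length = (S.dom g).length → (∀ p ∈ ts.zip (S.dom g), HasSort S τ p.1 p.2) →
      HasSort S τ (.app g ts) (S.cod g)

variable {S : SortedSignature G K} {τ : X → K} {τ' : Y → K} {k k' : K}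

theorem Term.hasSort_var_iff {x : X} : HasSort S τ (.var x : Term G X) k ↔ k = τ x :=
  ⟨fun h => by cases h; rfl, fun h => h ▸ .var x⟩

theorem Term.hasSort_app_iff {g : G} {ts : List (Term G X)} :
    HasSort S τ (.app g ts) k ↔ k = S.cod g ∧ List.Forall₂ (HasSort S τ) ts (S.dom g) := by
  constructor
  · rintro (_ | ⟨_, _, hlen, hts⟩)
    exact ⟨rfl, List.forall₂_iff_zip.2 ⟨hlen, fun hp => hts _ hp⟩⟩
  · rintro ⟨rfl, hts⟩
    obtain ⟨hlen, hts⟩ := List.forall₂_iff_zip.1 hts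
    exact .app g ts hlen fun p hp => hts hp

theorem Term.mem_varList_app {g : G} {ts : List (Term G X)} {x : X} :
    x ∈ (Term.app g ts).varList ↔ ∃ t ∈ ts, x ∈ t.varList := by
  simp only [Term.varList, List.mem_flatMap]

theorem Term.HasSort.subst {t : Term G X} {σ : X → Term G Y} (ht : HasSort S τ t k)
    (hσ : ∀ x ∈ t.varList, HasSort S τ' (σ x) (τ x)) : HasSort S τ' (t.subst σ) k := by
  induction ht with
  | var x => simpa [Term.subst, varList] using hσ
  | app g ts hlen _ ih =>
    rw [Term.subst, hasSort_app_iff, List.forall₂_map_left_iff]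
    refine ⟨rfl, List.forall₂_iff_zip.2 ⟨hlen, fun hp => ih _ hp fun x hx => hσ x ?_⟩⟩
    exact mem_varList_app.2 ⟨_, (List.of_mem_zip hp).1, hx⟩

theorem Term.HasSort.of_subst {t : Term G X} {σ : X → Term G Y} (ht : HasSort S τ t k)
    (htσ : HasSort S τ' (t.subst σ) k) : ∀ x ∈ t.varList, HasSort S τ' (σ x) (τ x) := by
  induction ht with
  | var x => simpa [Term.subst, varList] using htσ
  | app g ts hlen _ ih =>
    intro x hx
    obtain ⟨t, ht, hx⟩ := mem_varList_app.1 hx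
    obtain ⟨k, htk⟩ := exists_mem_zip hlen.le ht
    rw [Term.subst, hasSort_app_iff, List.forall₂_map_left_iff, List.forall₂_iff_zip] at htσ
    exact ih _ htk (htσ.2.2 htk) x hx

theorem Term.HasSort.eq_of_subst {t : Term G X} {σ : X → Term G Y} (ht : HasSort S τ t k)
    (hvar : ∀ x, t ≠ .var x) (htσ : HasSort S τ' (t.subst σ) k') : k' = k := by
  cases ht with
  | var x => exact absurd rfl (hvar x)
  | app g ts =>
    rw [Term.subst] at htσ
    exact (hasSort_app_iff.1 htσ).1

theorem Term.HasSort.exists_of_isSubterm {s t : Term G X} (hst : s.IsSubterm t)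
    (ht : HasSort S τ t k) : ∃ k', HasSort S τ s k' := by
  induction hst generalizing k with
  | refl => exact ⟨k, ht⟩
  | arg hmem _ ih =>
    obtain ⟨hlen, hts⟩ := List.forall₂_iff_zip.1 (hasSort_app_iff.1 ht).2
    obtain ⟨k', hk'⟩ := exists_mem_zip hlen.le hmem
    exact ih (hts hk')

theorem Term.HasSort.of_ctxStep {root : Term G X → Term G X → Prop}
    (hroot : ∀ {s t k}, root s t → HasSort S τ s k → HasSort S τ t k) {s t : Term G X}
    (hst : CtxStep root s t) (hs : HasSort S τ s k) : HasSort S τ t k := by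
  induction hst generalizing k with
  | root hst => exact hroot hst hs
  | congr _ ih =>
    obtain ⟨hk, hts⟩ := hasSort_app_iff.1 hs
    exact hasSort_app_iff.2 ⟨hk, forall₂_replace hts fun _ => ih⟩

/-- The rule `r` is well-sorted: its left-hand side is not a variable, its right-hand side has no
further variables, and the variables can be sorted so that both sides have the same sort. The
conditions are not restricted. -/
structure CRule.IsSorted (S : SortedSignature G K) (r : CRule G Y) : Prop where
  lhs_ne_var : ∀ x, r.lhs ≠ .var x
  varList_subset : r.rhs.varList ⊆ r.lhs.varList
  exists_hasSort : ∃ (τ : Y → K) (k : K), r.lhs.HasSort S τ k ∧ r.rhs.HasSort S τ k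

theorem Term.HasSort.of_rootStep {R : CTRS G Y} (hR : ∀ r ∈ R, r.IsSorted S)
    {prev : Term G X → Term G X → Prop} {s t : Term G X} (hst : RootStep R prev s t)
    (hs : HasSort S τ s k) : HasSort S τ t k := by
  obtain ⟨r, hr, σ, rfl, rfl, -⟩ := hst
  obtain ⟨τ', k', hl, hr'⟩ := (hR r hr).exists_hasSort
  obtain rfl := hl.eq_of_subst (hR r hr).lhs_ne_var hs
  exact hr'.subst fun x hx => hl.of_subst hs x ((hR r hr).varList_subset hx)

theorem Term.HasSort.of_red {R : CTRS G Y} (hR : ∀ r ∈ R, r.IsSorted S) {s t : Term G X}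
    (hst : Red R s t) (hs : HasSort S τ s k) : HasSort S τ t k := by
  obtain ⟨_ | n, hst⟩ := hst
  · exact hst.elim
  · exact hs.of_ctxStep (fun hst hs => hs.of_rootStep hR hst) hst

theorem Term.HasSort.of_reflTransGen_red {R : CTRS G Y} (hR : ∀ r ∈ R, r.IsSorted S)
    {s t : Term G X} (hst : Relation.ReflTransGen (Red R) s t) (hs : HasSort S τ s k) :
    HasSort S τ t k := by
  induction hst with
  | refl => exact hs
  | tail _ hst ih => exact ih.of_red hR hst

end ManySorted

/-! ### Variables of conditional rules -/

section Variables

variable {F : Type u} {V : Type v} [DecidableEq V]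

theorem Term.count_pos_iff {x : V} : ∀ {t : Term F V}, 0 < t.count x ↔ x ∈ t.varList
  | .var y => by by_cases h : y = x <;> simp [Term.count, Term.varList, h, Ne.symm]
  | .app f ts => by
    have ih : ∀ t ∈ ts, 0 < t.count x ↔ x ∈ t.varList := fun _ _ => Term.count_pos_iff
    simp only [Term.count, List.sum_pos_iff_exists_pos_nat, List.mem_map,
      exists_exists_and_eq_and, mem_varList_app]
    exact exists_congr fun t => and_congr_right (ih t)

theorem seqCount_pos_iff {x : V} {ts : List (Term F V)} :
    0 < seqCount x ts ↔ ∃ t ∈ ts, x ∈ t.varList := by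
  simp only [seqCount, List.sum_pos_iff_exists_pos_nat, List.mem_map, exists_exists_and_eq_and,
    Term.count_pos_iff]

variable {ρ : CRule F V} {i j : ℕ} {s t : Term F V}

theorem mem_Xlist_iff {x : V} :
    x ∈ Xlist ρ j ↔ x ∈ ρ.lhs.varList ∨ ∃ t ∈ (ρ.conds.take j).map Prod.snd, x ∈ t.varList := by
  simp only [Xlist, List.mem_dedup, List.mem_append, List.mem_flatMap]

theorem mem_Vlist_iff {x : V} :
    x ∈ Vlist ρ j ↔ ∃ t ∈ (ρ.conds.take j).map Prod.snd, x ∈ t.varList := by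
  simp only [Vlist, List.mem_dedup, List.mem_flatMap]

theorem varList_lhs_subset_Xlist : ρ.lhs.varList ⊆ Xlist ρ j :=
  fun _ hx => mem_Xlist_iff.2 (.inl hx)

theorem Vlist_subset_Xlist : Vlist ρ j ⊆ Xlist ρ j :=
  fun _ hx => mem_Xlist_iff.2 (.inr (mem_Vlist_iff.1 hx))

theorem Xlist_zero_subset : Xlist ρ 0 ⊆ ρ.lhs.varList := by
  intro x hx
  simpa [mem_Xlist_iff] using hx

theorem Xlist_mono (hij : i ≤ j) : Xlist ρ i ⊆ Xlist ρ j := by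
  intro x hx
  rw [mem_Xlist_iff] at hx ⊢
  exact hx.imp_right fun ⟨t, ht, hx⟩ =>
    ⟨t, List.map_subset _ (List.take_subset_take_left _ hij) ht, hx⟩

theorem mem_Xlist_succ_iff (hj : ρ.conds[j]? = some (s, t)) {x : V} :
    x ∈ Xlist ρ (j + 1) ↔ x ∈ ρ.lhs.varList ∨ x ∈ Vlist ρ j ∨ x ∈ t.varList := by
  simp [mem_Xlist_iff, mem_Vlist_iff, List.take_add_one, hj, or_and_right, exists_or]

theorem CRule.Det.varList_subset_Xlist (h : ρ.Det) (hj : ρ.conds[j]? = some (s, t)) :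
    s.varList ⊆ Xlist ρ j := by
  intro x hx
  have hcount := h j s t hj x (Term.count_pos_iff.2 hx)
  rw [seqCount_pos_iff, List.exists_mem_cons_iff] at hcount
  exact mem_Xlist_iff.2 hcount

theorem CRule.Type3.varList_subset_Xlist (h3 : ρ.Type3) (hdet : ρ.Det) :
    ρ.rhs.varList ⊆ Xlist ρ ρ.conds.length := by
  intro x hx
  obtain ⟨u, hu, hxu⟩ := seqCount_pos_iff.1 (h3 x (Term.count_pos_iff.2 hx))
  rcases List.mem_cons.1 hu with rfl | hu
  · exact varList_lhs_subset_Xlist hxu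
  obtain ⟨⟨s, t⟩, hc, hu⟩ := List.mem_flatMap.1 hu
  obtain ⟨i, hi⟩ := List.mem_iff_getElem?.1 hc
  have hlen : i < ρ.conds.length := (List.getElem?_eq_some_iff.1 hi).1
  simp only [List.mem_cons, List.not_mem_nil, or_false] at hu
  rcases hu with rfl | rfl
  · exact Xlist_mono hlen.le (hdet.varList_subset_Xlist hi hxu)
  · exact Xlist_mono hlen ((mem_Xlist_succ_iff hi).2 (.inr (.inr hxu)))

end Variables

/-! ### Variables of the rules of `SR(R)` -/

section SRVariables

theorem Term.varList_rename {G : Type*} {X : Type v} {Y : Type w} (g : X → Y) :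
    ∀ t : Term G X, (t.rename g).varList = t.varList.map g
  | .var x => by simp [rename, Term.subst, varList]
  | .app f ts => by
    have ih : ∀ t ∈ ts, (t.rename g).varList = t.varList.map g :=
      fun t _ => Term.varList_rename g t
    simp only [rename] at ih
    simp only [rename, Term.subst, varList, List.flatMap_map, List.map_flatMap]
    exact List.flatMap_congr ih

variable {F : Type u} {V : Type v} {m : F → ℕ}

theorem varList_guardT {X : Type w} (t : Term (SSym F V) X) :
    (guardT t).varList = t.varList := by
  simp [guardT, Term.varList]

theorem varList_barT : ∀ t : Term F V, (barT m t).varList = t.varList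
  | .var x => by simp only [barT, Term.varList]
  | .app f ts => by
    have ih : ∀ t ∈ ts, (barT m t).varList = t.varList := fun t _ => varList_barT t
    have hbot : (List.replicate (m f) (botT (F := F) (V := V))).flatMap Term.varList =
        ([] : List V) := by
      simp [botT, Term.varList]
    simp only [barT, Term.varList, List.flatMap_append, List.flatMap_map, hbot, List.append_nil]
    exact List.flatMap_congr ih

theorem varList_barR (t : Term F V) : (barR m t).varList = t.varList.map Sum.inl := by
  rw [barR, Term.varList_rename, varList_barT]

theorem length_extTList (ts : List (Term F V)) (c : ℕ) :
    (extTList m ts c).1.length = ts.length := by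
  induction ts generalizing c with
  | nil => simp [extTList]
  | cons t ts ih => simp [extTList, ih]

mutual

theorem map_inl_varList_subset_extT :
    ∀ (t : Term F V) (c : ℕ), t.varList.map Sum.inl ⊆ (extT m t c).1.varList
  | .var x, c => by simp [extT, Term.varList]
  | .app f ts, c => by
    simp only [extT, Term.varList, List.flatMap_append]
    exact List.subset_append_of_subset_left _ (map_inl_flatMap_varList_subset_extTList ts c)

theorem map_inl_flatMap_varList_subset_extTList :
    ∀ (ts : List (Term F V)) (c : ℕ),
      (ts.flatMap Term.varList).map Sum.inl ⊆ (extTList m ts c).1.flatMap Term.varList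
  | [], _ => by simp
  | t :: ts, c => by
    simp only [extTList, List.flatMap_cons, List.map_append, List.append_subset]
    exact ⟨List.subset_append_of_subset_left _ (map_inl_varList_subset_extT t c),
      List.subset_append_of_subset_right _ (map_inl_flatMap_varList_subset_extTList ts _)⟩

end

variable {idx : CRule F V → ℕ} {ρ : CRule F V} {f : F} {ws : List (Term F V)}
  {a b : Term (SSym F V) (RVar V)}

theorem mem_varList_slotT {y : RVar V} : y ∈ (slotT m idx ρ f ws a).varList ↔
    y ∈ (extTList m ws 0).1.flatMap Term.varList ∨ (idx ρ < m f ∧ y ∈ a.varList) ∨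
      ∃ q < m f, q ≠ idx ρ ∧ y = Sum.inr ((extTList m ws 0).2 + q) := by
  simp only [slotT, Term.mem_varList_app, List.mem_append, or_and_right, exists_or, List.mem_map,
    List.mem_range, List.mem_flatMap]
  refine or_congr_right ?_
  constructor
  · rintro ⟨_, ⟨q, hq, rfl⟩, hy⟩
    split_ifs at hy with h
    · exact .inl ⟨h ▸ hq, hy⟩
    · exact .inr ⟨q, hq, h, by simpa [Term.varList] using hy⟩
  · rintro (⟨h, hy⟩ | ⟨q, hq, h, rfl⟩)
    · exact ⟨_, ⟨idx ρ, h, rfl⟩, by simpa using hy⟩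
    · exact ⟨_, ⟨q, hq, rfl⟩, by simp [h, Term.varList]⟩

theorem varList_slotT_subset (h : b.varList ⊆ (slotT m idx ρ f ws a).varList) :
    (slotT m idx ρ f ws b).varList ⊆ (slotT m idx ρ f ws a).varList := by
  intro y hy
  obtain hy | ⟨-, hy⟩ | hy := mem_varList_slotT.1 hy
  · exact mem_varList_slotT.2 (.inl hy)
  · exact h hy
  · exact mem_varList_slotT.2 (.inr (.inr hy))

theorem map_inl_varList_lhs_subset_slotT (hl : ρ.lhs = .app f ws) :
    ρ.lhs.varList.map Sum.inl ⊆ (slotT m idx ρ f ws a).varList := by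
  rw [hl, Term.varList]
  exact fun y hy => mem_varList_slotT.2 (.inl (map_inl_flatMap_varList_subset_extTList ws 0 hy))

variable [DecidableEq V] {j : ℕ} {s t : Term F V}

theorem varList_tupT : (tupT ρ j a).varList = a.varList ++ (Vlist ρ j).map Sum.inl := by
  simp only [tupT, guardT, Term.varList, List.flatMap_cons, List.flatMap_nil, List.append_nil,
    List.flatMap_map, ← List.map_eq_flatMap]

theorem varList_tupT_barR_subset (hs : s.varList ⊆ Xlist ρ j) :
    (tupT ρ j (barR m s)).varList ⊆ (Xlist ρ j).map Sum.inl := by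
  rw [varList_tupT, varList_barR, List.append_subset]
  exact ⟨List.map_subset _ hs, List.map_subset _ Vlist_subset_Xlist⟩

theorem map_inl_Xlist_subset_slotT (hl : ρ.lhs = .app f ws) (hidx : idx ρ < m f)
    (hj : ρ.conds[j]? = some (s, t)) :
    (Xlist ρ (j + 1)).map Sum.inl ⊆
      (slotT m idx ρ f ws (tupT ρ j (extCond m f ws t))).varList := by
  intro y hy
  obtain ⟨x, hx, rfl⟩ := List.mem_map.1 hy
  rcases (mem_Xlist_succ_iff hj).1 hx with hx | hx
  · exact map_inl_varList_lhs_subset_slotT hl (List.mem_map_of_mem hx)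
  refine mem_varList_slotT.2 (.inr (.inl ⟨hidx, ?_⟩))
  rw [varList_tupT, List.mem_append]
  rcases hx with hx | hx
  · exact .inr (List.mem_map_of_mem hx)
  · exact .inl (map_inl_varList_subset_extT t _ (List.mem_map_of_mem hx))

end SRVariables

/-! ### The sorts of `SR(R)` -/

/-- The sorts of the terms over `F̄`: `main` for those that stand for terms over `F`, `extra` for
`⊥` and the tuples, which are the contents of extra arguments. -/
inductive SRSort where
  | main
  | extra

open SRSort

section SRSignature

variable {F : Type u} {V : Type v} [DecidableEq V]

/-- The many-sorted signature of `F̄`. -/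
def srSignature (ar m : F → ℕ) : SortedSignature (SSym F V) SRSort where
  dom
    | .orig f => List.replicate (ar f) main ++ List.replicate (m f) extra
    | .bot => []
    | .guard => [main]
    | .tup ρ j => main :: List.replicate (Vlist ρ j).length main
  cod
    | .orig _ => main
    | .bot => extra
    | .guard => main
    | .tup _ _ => extra

/-- The sorts of the variables in the rules of `SR(R)` that stem from rules of `R`: the fresh
variables stand for contents of extra arguments. -/
def ruleVarSort : RVar V → SRSort := Sum.elim (fun _ => main) (fun _ => extra)

variable {ar m : F → ℕ} {X : Type w} {τ : X → SRSort}

theorem hasSort_orig_append {f : F} {ts es : List (Term (SSym F V) X)} (hts : ts.length = ar f)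
    (hes : es.length = m f) (htm : ∀ t ∈ ts, t.HasSort (srSignature ar m) τ main)
    (hee : ∀ e ∈ es, e.HasSort (srSignature ar m) τ extra) :
    (Term.app (.orig f) (ts ++ es)).HasSort (srSignature ar m) τ main :=
  Term.hasSort_app_iff.2 ⟨rfl, List.rel_append
    (forall₂_replicate_right_iff.2 ⟨hts, htm⟩) (forall₂_replicate_right_iff.2 ⟨hes, hee⟩)⟩

theorem hasSort_botT : (botT : Term (SSym F V) X).HasSort (srSignature ar m) τ extra :=
  Term.hasSort_app_iff.2 ⟨rfl, .nil⟩

theorem hasSort_guardT {t : Term (SSym F V) X} (ht : t.HasSort (srSignature ar m) τ main) :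
    (guardT t).HasSort (srSignature ar m) τ main :=
  Term.hasSort_app_iff.2 ⟨rfl, .cons ht .nil⟩

theorem hasSort_barT {t : Term F V} (ht : t.WF ar) :
    (barT m t).HasSort (srSignature ar m) (fun _ => main) main := by
  induction ht with
  | var x => rw [barT]; exact .var x
  | app f ts hlen _ ih =>
    rw [barT]
    refine hasSort_orig_append (by simpa using hlen) (by simp) (by simpa using ih) fun e he => ?_
    exact List.eq_of_mem_replicate he ▸ hasSort_botT

theorem hasSort_barR {t : Term F V} (ht : t.WF ar) :
    (barR m t).HasSort (srSignature ar m) ruleVarSort main :=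
  (hasSort_barT ht).subst fun x _ => .var (Sum.inl x)

theorem hasSort_extTList {ts : List (Term F V)}
    (hts : ∀ t ∈ ts, ∀ c, (extT m t c).1.HasSort (srSignature ar m) ruleVarSort main) (c : ℕ) :
    ∀ u ∈ (extTList m ts c).1, u.HasSort (srSignature ar m) ruleVarSort main := by
  induction ts generalizing c with
  | nil => simp [extTList]
  | cons t ts ih =>
    rw [List.forall_mem_cons] at hts
    simpa only [extTList, List.forall_mem_cons] using ⟨hts.1 c, ih hts.2 _⟩

theorem hasSort_extT {t : Term F V} (ht : t.WF ar) (c : ℕ) :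
    (extT m t c).1.HasSort (srSignature ar m) ruleVarSort main := by
  induction ht generalizing c with
  | var x => rw [extT]; exact .var (Sum.inl x)
  | app f ts hlen _ ih =>
    rw [extT]
    refine hasSort_orig_append (by rw [length_extTList, hlen]) (by simp)
      (hasSort_extTList ih c) fun e he => ?_
    obtain ⟨q, -, rfl⟩ := List.mem_map.1 he
    exact .var (Sum.inr _)

theorem hasSort_slotT {idx : CRule F V → ℕ} {ρ : CRule F V} {f : F} {ws : List (Term F V)}
    {a : Term (SSym F V) (RVar V)} (hws : (Term.app f ws).WF ar)
    (ha : a.HasSort (srSignature ar m) ruleVarSort extra) :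
    (slotT m idx ρ f ws a).HasSort (srSignature ar m) ruleVarSort main := by
  obtain _ | ⟨_, _, hlen, hws⟩ := hws
  refine hasSort_orig_append (by rw [length_extTList, hlen]) (by simp)
    (hasSort_extTList (fun w hw => hasSort_extT (hws w hw)) 0) fun e he => ?_
  obtain ⟨q, -, rfl⟩ := List.mem_map.1 he
  split_ifs
  · exact ha
  · exact .var (Sum.inr _)

theorem hasSort_tupT {ρ : CRule F V} {j : ℕ} {a : Term (SSym F V) (RVar V)}
    (ha : a.HasSort (srSignature ar m) ruleVarSort main) :
    (tupT ρ j a).HasSort (srSignature ar m) ruleVarSort extra := by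
  refine Term.hasSort_app_iff.2 ⟨rfl, .cons (hasSort_guardT ha) ?_⟩
  refine forall₂_replicate_right_iff.2 ⟨by simp, fun u hu => ?_⟩
  obtain ⟨x, -, rfl⟩ := List.mem_map.1 hu
  exact .var (Sum.inl x)

end SRSignature

/-! ### Rewriting with `SR(R)` preserves sorts -/

section SubjectReduction

variable {F : Type u} {V : Type v} {ar m : F → ℕ} {idx : CRule F V → ℕ} {R : CTRS F V}

theorem IsNumbering.idx_lt (hN : IsNumbering R m idx) {ρ : CRule F V} (hρ : ρ ∈ R)
    (hc : ρ.conds ≠ []) {f : F} {ws : List (Term F V)} (hl : ρ.lhs = .app f ws) :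
    idx ρ < m f :=
  (hN f).mapsTo ⟨hρ, hc, ws, hl⟩

theorem IsNumbering.eq_zero_of_not_isDefined (hN : IsNumbering R m idx) {c : F}
    (hc : ¬ IsDefined R c) : m c = 0 := by
  by_contra h
  obtain ⟨ρ, ⟨hρ, -, hl⟩, -⟩ := (hN c).surjOn (Set.mem_Iio.2 (Nat.pos_of_ne_zero h))
  exact hc ⟨ρ, hρ, hl⟩

theorem varList_shift_subset {f : F} (i : ℕ) :
    (guardT (.app (.orig f)
        ((List.range (ar f)).map (fun q => .var (Sum.inr q)) ++
          List.replicate (m f) botT)) : Term (SSym F V) (RVar V)).varList ⊆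
      (Term.app (.orig f)
        ((List.range (ar f)).map
            (fun q => if q = i then guardT (.var (Sum.inr q)) else .var (Sum.inr q)) ++
          (List.range (m f)).map (fun q => .var (Sum.inr (ar f + q)))) :
        Term (SSym F V) (RVar V)).varList := by
  rw [varList_guardT]
  intro y hy
  simp only [Term.mem_varList_app, List.mem_append] at hy ⊢
  obtain ⟨u, hu | hu, hy⟩ := hy
  · obtain ⟨q, hq, rfl⟩ := List.mem_map.1 hu
    refine ⟨_, .inl (List.mem_map.2 ⟨q, hq, rfl⟩), ?_⟩
    split_ifs
    · rwa [varList_guardT]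
    · exact hy
  · obtain rfl := List.eq_of_mem_replicate hu
    simp [botT, Term.varList] at hy

variable [DecidableEq V] {r : CRule (SSym F V) (RVar V)}

theorem SRSys.lhs_ne_var (hD : IsDCTRS ar R) (hr : SRSys ar m idx R r) (y : RVar V) :
    r.lhs ≠ .var y := by
  cases hr with
  | @uncond ρ hρ _ =>
    cases hl : ρ.lhs with
    | var x => exact absurd hl ((hD ρ hρ).2.1 x)
    | app f ws => simp [extT]
  | _ => simp [slotT, guardT]

theorem SRSys.varList_subset (hD : IsDCTRS ar R) (hN : IsNumbering R m idx)
    (hr : SRSys ar m idx R r) : r.rhs.varList ⊆ r.lhs.varList := by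
  cases hr with
  | @uncond ρ hρ hc =>
    obtain ⟨-, -, hdet, h3⟩ := hD ρ hρ
    have hrhs : ρ.rhs.varList ⊆ Xlist ρ 0 := by simpa [hc] using h3.varList_subset_Xlist hdet
    rw [varList_guardT, varList_barR]
    exact List.Subset.trans (List.map_subset _ (List.Subset.trans hrhs Xlist_zero_subset))
      (map_inl_varList_subset_extT ρ.lhs 0)
  | @first ρ f ws s t hρ hl hj =>
    have hs : s.varList ⊆ Xlist ρ 0 := (hD ρ hρ).2.2.1.varList_subset_Xlist hj
    refine varList_slotT_subset (List.Subset.trans (varList_tupT_barR_subset hs) ?_)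
    exact List.Subset.trans (List.map_subset _ Xlist_zero_subset)
      (map_inl_varList_lhs_subset_slotT hl)
  | @next ρ f ws j s t s' t' hρ hl hj hj' =>
    have hs' : s'.varList ⊆ Xlist ρ (j + 1) := (hD ρ hρ).2.2.1.varList_subset_Xlist hj'
    have hidx := hN.idx_lt hρ (List.ne_nil_of_mem (List.mem_of_getElem? hj)) hl
    exact varList_slotT_subset (List.Subset.trans (varList_tupT_barR_subset hs')
      (map_inl_Xlist_subset_slotT hl hidx hj))
  | @last ρ f ws j s t hρ hl hj hlen =>
    obtain ⟨-, -, hdet, h3⟩ := hD ρ hρ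
    have hrhs : ρ.rhs.varList ⊆ Xlist ρ (j + 1) := hlen ▸ h3.varList_subset_Xlist hdet
    have hidx := hN.idx_lt hρ (List.ne_nil_of_mem (List.mem_of_getElem? hj)) hl
    rw [varList_guardT, varList_barR]
    exact List.Subset.trans (List.map_subset _ hrhs) (map_inl_Xlist_subset_slotT hl hidx hj)
  | unnest => simp [varList_guardT]
  | @shift f i hi => exact varList_shift_subset i

theorem exists_hasSort_shift {f : F} (i : ℕ) :
    ∃ τ : RVar V → SRSort,
      Term.HasSort (G := SSym F V) (srSignature ar m) τ
        (.app (.orig f)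
          ((List.range (ar f)).map
              (fun q => if q = i then guardT (.var (Sum.inr q)) else .var (Sum.inr q)) ++
            (List.range (m f)).map (fun q => .var (Sum.inr (ar f + q))))) main ∧
      Term.HasSort (G := SSym F V) (srSignature ar m) τ
        (guardT (.app (.orig f)
          ((List.range (ar f)).map (fun q => .var (Sum.inr q)) ++
            List.replicate (m f) botT))) main := by
  let τ : RVar V → SRSort := Sum.elim (fun _ => main) (fun q => if q < ar f then main else extra)
  have hx : ∀ q < ar f,
      (.var (Sum.inr q) : Term (SSym F V) (RVar V)).HasSort (srSignature ar m) τ main :=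
    fun q hq => Term.hasSort_var_iff.2 (if_pos hq).symm
  have hz : ∀ q, (.var (Sum.inr (ar f + q)) : Term (SSym F V) (RVar V)).HasSort
      (srSignature ar m) τ extra :=
    fun q => Term.hasSort_var_iff.2 (if_neg (by omega)).symm
  refine ⟨τ, hasSort_orig_append (by simp) (by simp) ?_ ?_,
    hasSort_guardT (hasSort_orig_append (by simp) (by simp) ?_ ?_)⟩
  · simp only [List.forall_mem_map, List.mem_range]
    intro q hq
    split_ifs
    · exact hasSort_guardT (hx q hq)
    · exact hx q hq
  · simpa only [List.forall_mem_map] using fun q _ => hz q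
  · simpa only [List.forall_mem_map, List.mem_range] using hx
  · exact fun e he => List.eq_of_mem_replicate he ▸ hasSort_botT

theorem SRSys.exists_hasSort (hD : IsDCTRS ar R) (hr : SRSys ar m idx R r) :
    ∃ τ k, r.lhs.HasSort (srSignature ar m) τ k ∧ r.rhs.HasSort (srSignature ar m) τ k := by
  have hcond : ∀ {ρ : CRule F V} {j : ℕ} {s t : Term F V}, ρ ∈ R → ρ.conds[j]? = some (s, t) →
      s.WF ar ∧ t.WF ar :=
    fun hρ hj => (hD _ hρ).1.2.2 _ (List.mem_of_getElem? hj)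
  cases hr with
  | @uncond ρ hρ hc =>
    obtain ⟨hl, hr, -⟩ := (hD ρ hρ).1
    exact ⟨_, _, hasSort_extT hl 0, hasSort_guardT (hasSort_barR hr)⟩
  | @first ρ f ws s t hρ hl hj =>
    have hws := hl ▸ (hD ρ hρ).1.1
    exact ⟨_, _, hasSort_slotT hws hasSort_botT,
      hasSort_slotT hws (hasSort_tupT (hasSort_barR (hcond hρ hj).1))⟩
  | @next ρ f ws j s t s' t' hρ hl hj hj' =>
    have hws := hl ▸ (hD ρ hρ).1.1
    exact ⟨_, _, hasSort_slotT hws (hasSort_tupT (hasSort_extT (hcond hρ hj).2 _)),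
      hasSort_slotT hws (hasSort_tupT (hasSort_barR (hcond hρ hj').1))⟩
  | @last ρ f ws j s t hρ hl hj hlen =>
    obtain ⟨hws, hr, -⟩ := (hD ρ hρ).1
    exact ⟨_, _, hasSort_slotT (hl ▸ hws) (hasSort_tupT (hasSort_extT (hcond hρ hj).2 _)),
      hasSort_guardT (hasSort_barR hr)⟩
  | unnest =>
    have h : (guardT (.var (Sum.inr 0)) : Term (SSym F V) (RVar V)).HasSort (srSignature ar m)
      (fun _ => main) main := hasSort_guardT (.var _)
    exact ⟨_, _, hasSort_guardT h, h⟩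
  | @shift f i hi => exact (exists_hasSort_shift i).imp fun _ hτ => ⟨main, hτ⟩

theorem SRSys.isSorted (hD : IsDCTRS ar R) (hN : IsNumbering R m idx)
    (hr : SRSys ar m idx R r) : r.IsSorted (srSignature ar m) :=
  ⟨hr.lhs_ne_var hD, hr.varList_subset hD hN, hr.exists_hasSort hD⟩

theorem SRReachable.exists_hasSort (hD : IsDCTRS ar R) (hN : IsNumbering R m idx)
    {t : Term (SSym F V) V} (ht : SRReachable ar m idx R t) :
    ∃ k, t.HasSort (srSignature ar m) (fun _ => main) k := by
  obtain ⟨s, t₀, hs, hst₀, htt₀⟩ := ht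
  have hbar := hasSort_guardT (hasSort_barT (m := m) hs)
  exact (hbar.of_reflTransGen_red (fun r hr => SRSys.isSorted hD hN hr) hst₀).exists_of_isSubterm
    htt₀

theorem ProperRoot.sort_eq_main {t : Term (SSym F V) V} (ht : ProperRoot t) {k : SRSort}
    (hk : t.HasSort (srSignature ar m) (fun _ => main) k) : k = main := by
  cases hk with
  | var x => rfl
  | app g ts =>
    cases g with
    | orig | guard => rfl
    | bot => exact absurd rfl (ht.1 ts)
    | tup ρ j => exact absurd rfl (ht.2 ρ j ts)

end SubjectReduction

/-! ### The first component of `Φ` -/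

section Hat

variable {F : Type u} {V : Type v} {ar m : F → ℕ}

theorem hatT_orig (f : F) (ts : List (Term (SSym F V) V)) :
    hatT ar (.app (.orig f) ts) = ((ts.take (ar f)).mapM (hatT ar)).map (Term.app f) := by
  simp [hatT]

theorem hatT_guardT (t : Term (SSym F V) V) : hatT ar (guardT t) = hatT ar t := by
  simp [guardT, hatT]

variable [DecidableEq V] {idx : CRule F V → ℕ} {R : CTRS F V}

theorem app_mem_Phi (hN : IsNumbering R m idx) {f : F} {ts es : List (Term (SSym F V) V)}
    {us : List (Term (USym F V) V)} (hts : ts.length = ar f) (hes : es.length = m f)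
    (hus : List.Forall₂ (fun t u => u ∈ Phi ar m idx R t) ts us) :
    Term.app (Sum.inl f) us ∈ Phi ar m idx R (.app (.orig f) (ts ++ es)) := by
  obtain ⟨hlen, hmem⟩ := List.forall₂_iff_zip.1 hus
  by_cases hf : IsDefined R f
  · exact .reset hf hts hes (.plain hf hts (hlen ▸ hts) fun _ hp => hmem hp)
  · obtain rfl : es = [] := List.length_eq_zero_iff.1 (hes.trans (hN.eq_zero_of_not_isDefined hf))
    rw [List.append_nil]
    exact .con hf hts (hlen ▸ hts) fun _ hp => hmem hp

theorem exists_hatT_orig_eq_some (hN : IsNumbering R m idx) {f : F}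
    {ts : List (Term (SSym F V) V)} (hlen : ts.length = ar f + m f)
    (hts : ∀ t ∈ ts.take (ar f), ∃ s, hatT ar t = some s ∧ liftU s ∈ Phi ar m idx R t) :
    ∃ s, hatT ar (.app (.orig f) ts) = some s ∧
      liftU s ∈ Phi ar m idx R (.app (.orig f) ts) := by
  obtain ⟨ss, hss⟩ := exists_forall₂_of_forall_exists hts
  refine ⟨.app f ss, ?_, ?_⟩
  · rw [hatT_orig, mapM_eq_some_of_forall₂ (hss.imp fun _ _ h => h.1), Option.map_some]
  · rw [liftU, ← List.take_append_drop (ar f) ts]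
    exact app_mem_Phi hN (by simp [hlen]) (by simp [hlen])
      (List.forall₂_map_right_iff.2 (hss.imp fun _ _ h => h.2))

theorem exists_hatT_eq_some_of_hasSort (hN : IsNumbering R m idx) {t : Term (SSym F V) V}
    {k : SRSort} (ht : t.HasSort (srSignature ar m) (fun _ => main) k) (hk : k = main) :
    ∃ s, hatT ar t = some s ∧ liftU s ∈ Phi ar m idx R t := by
  induction ht with
  | var x =>
    refine ⟨.var x, by rw [hatT], ?_⟩
    rw [liftU]
    exact .var x
  | app g ts hlen _ ih =>
    cases g with
    | bot | tup => cases hk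
    | guard =>
      obtain ⟨t, rfl⟩ := List.length_eq_one_iff.1 hlen
      obtain ⟨s, hs, hmem⟩ := ih (t, main) List.mem_cons_self rfl
      exact ⟨s, (hatT_guardT t).trans hs, .guard hmem⟩
    | orig f =>
      have hts := List.forall₂_take_append _ _ _ (List.forall₂_iff_zip.2 ⟨hlen, fun hp => ih _ hp⟩)
      rw [List.length_replicate, forall₂_replicate_right_iff] at hts
      exact exists_hatT_orig_eq_some hN (by simpa [srSignature] using hlen)
        fun t ht => hts.2 t ht rfl

end Hat

theorem hat_mem_Phi_general {F : Type u} {V : Type v} [DecidableEq V]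
    (ar m : F → ℕ) (idx : CRule F V → ℕ) (R : CTRS F V)
    (hD : IsDCTRS ar R) (hN : IsNumbering R m idx)
    (t : Term (SSym F V) V) (ht : SRReachable ar m idx R t) (hroot : ProperRoot t) :
    (∃ s : Term F V, hatT ar t = some s ∧ liftU s ∈ Phi ar m idx R t) ∧
      1 ≤ (Phi ar m idx R t).encard := by
  obtain ⟨k, hk⟩ := ht.exists_hasSort hD hN
  obtain ⟨s, hs, hmem⟩ := exists_hatT_eq_some_of_hasSort hN hk (hroot.sort_eq_main hk)
  exact ⟨⟨s, hs, hmem⟩, Set.one_le_encard_iff_nonempty.2 ⟨_, hmem⟩⟩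

theorem hat_mem_Phi {F : Type u} {V : Type v} [DecidableEq V]
    (ar m : F → ℕ) (idx : CRule F V → ℕ) (R : CTRS F V)
    (hD : IsDCTRS ar R) (hU : IsUWLL R) (hN : IsNumbering R m idx)
    (t : Term (SSym F V) V) (ht : SRReachable ar m idx R t) (hroot : ProperRoot t) :
    (∃ s : Term F V, hatT ar t = some s ∧ liftU s ∈ Phi ar m idx R t) ∧
      1 ≤ (Phi ar m idx R t).encard :=
  hat_mem_Phi_general ar m idx R hD hN t ht hroot
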